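/- For every k ≥ 1 there is an acyclic unique-sink orientation of the graph of the dual cyclic 4-polytope C°(n), n = 12k+1, such that every path from the global source to the global sink that the random facet algorithm can possibly follow has length at least Ω(n²). In particular, the shortest directed source-to-sink path consistent with the random facet recursion has at least c·n² vertices for some constant c > 0 and all sufficiently large k. -/

import Mathlib

/-- Gale's evenness condition for a subset of `{0,…,n-1}`. -/
def galeCond (n : ℕ) (S : Finset ℕ) : Prop :=
  ∀ i ∈ Finset.range n, ∀ j ∈ Finset.range n, i < j → i ∉ S → j ∉ S →
    Even ((S.filter fun k => i < k ∧ k < j).card)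

/-- Vertices of the dual cyclic 4-polytope `C°(n)`. -/
abbrev DCVert (n : ℕ) := {S : Finset ℕ // S ⊆ Finset.range n ∧ S.card = 4 ∧ galeCond n S}

/-- Possible trajectories of the random facet algorithm on an orientation `D` of the
graph of `C°(n)`.  `RFRun n D T v s l` means: started at vertex `v` of the face of
`C°(n)` determined by the set `T` of facet indices, the algorithm can visit the
vertex sequence `l` and stop at the sink `s` of that face.  At a 1-vertex the unique
improving edge is followed; otherwise some facet `i` containing the current vertex is
chosen and the problem restricted to it is solved recursively. -/
inductive RFRun (n : ℕ) (D : DCVert n → DCVert n → Prop) :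
    Finset ℕ → DCVert n → DCVert n → List (DCVert n) → Prop
  | sink (T : Finset ℕ) (v : DCVert n) (hv : T ⊆ v.1)
      (h : ∀ w, T ⊆ w.1 → ¬ D v w) : RFRun n D T v v [v]
  | follow (T : Finset ℕ) (v w s : DCVert n) (l : List (DCVert n))
      (hv : T ⊆ v.1) (hvw : D v w) (hw : T ⊆ w.1)
      (huniq : ∀ w', T ⊆ w'.1 → D v w' → w' = w)
      (h : RFRun n D T w s l) : RFRun n D T v s (v :: l)
  | facet (T : Finset ℕ) (v u s : DCVert n) (l₁ l₂ : List (DCVert n)) (i : ℕ)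
      (hv : T ⊆ v.1) (hi : i ∈ v.1) (hiT : i ∉ T)
      (hout : ∃ w, T ⊆ w.1 ∧ D v w)
      (hmulti : ¬ ∃! w, T ⊆ w.1 ∧ D v w)
      (h₁ : RFRun n D (insert i T) v u l₁)
      (h₂ : RFRun n D T u s l₂) :
      RFRun n D T v s (l₁ ++ l₂.tail)


/-! ### Coordinates on the vertices -/

def vset (k x y : ℕ) : Finset ℕ := {x, x + 1, y, if y = 12 * k then 0 else y + 1}

def vval (k x y : ℕ) : Prop := x + 2 ≤ y ∧ y ≤ 12 * k ∧ ¬ (x = 0 ∧ y = 12 * k)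

lemma mem_vset {k x y e : ℕ} : e ∈ vset k x y ↔
    e = x ∨ e = x + 1 ∨ e = y ∨ (y = 12 * k ∧ e = 0) ∨ (y ≠ 12 * k ∧ e = y + 1) := by
  unfold vset
  split_ifs with h <;> simp [h]

lemma card_filter_four (a b c d : ℕ) (h1 : a ≠ b) (h2 : a ≠ c) (h3 : a ≠ d) (h4 : b ≠ c)
    (h5 : b ≠ d) (h6 : c ≠ d) (p : ℕ → Prop) [DecidablePred p] :
    ((({a, b, c, d} : Finset ℕ)).filter p).card =
      (if p a then 1 else 0) + (if p b then 1 else 0) + (if p c then 1 else 0)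
        + (if p d then 1 else 0) := by
  rw [Finset.card_filter, Finset.sum_insert (by simp [*]), Finset.sum_insert (by simp [*]),
    Finset.sum_insert (by simp [*]), Finset.sum_singleton]
  ring

lemma vset_card_filter {k x y : ℕ} (h : vval k x y) (p : ℕ → Prop) [DecidablePred p] :
    ((vset k x y).filter p).card =
      (if p x then 1 else 0) + (if p (x + 1) then 1 else 0) + (if p y then 1 else 0)
        + (if p (if y = 12 * k then 0 else y + 1) then 1 else 0) := by
  unfold vset
  unfold vval at h
  have e : ∀ z, z = (if y = 12 * k then 0 else y + 1) →
      (y = 12 * k ∧ z = 0) ∨ (y ≠ 12 * k ∧ z = y + 1) := by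
    intro z hz
    split_ifs at hz <;> omega
  have e1 := e _ rfl
  apply card_filter_four <;> omega

lemma vset_card {k x y : ℕ} (h : vval k x y) : (vset k x y).card = 4 := by
  have := vset_card_filter h (fun _ => True)
  simpa using this

lemma vset_sub {k x y : ℕ} (h : vval k x y) : vset k x y ⊆ Finset.range (12 * k + 1) := by
  intro e he
  rw [mem_vset] at he
  unfold vval at h
  rw [Finset.mem_range]
  omega

lemma vset_gale {k x y : ℕ} (h : vval k x y) : galeCond (12 * k + 1) (vset k x y) := by
  intro i hi j hj hij hiS hjS
  rw [vset_card_filter h, Nat.even_iff]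
  rw [mem_vset] at hiS hjS
  rw [Finset.mem_range] at hi hj
  unfold vval at h
  split_ifs <;> omega

lemma vset_inj {k x y x' y' : ℕ} (h : vval k x y) (h' : vval k x' y')
    (e : vset k x y = vset k x' y') : x = x' ∧ y = y' := by
  have a1 := fun z => (Finset.ext_iff.1 e z)
  simp only [mem_vset] at a1
  unfold vval at h h'
  have b1 := a1 x
  have b2 := a1 (x + 1)
  have b3 := a1 y
  have b4 := a1 (y + 1)
  have b5 := a1 x'
  have b6 := a1 (x' + 1)
  have b7 := a1 y'
  have b8 := a1 (y' + 1)
  have b9 := a1 0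
  omega

lemma sorted_four (S : Finset ℕ) (h : S.card = 4) :
    ∃ a b c d, a < b ∧ b < c ∧ c < d ∧ S = {a, b, c, d} := by
  let f := S.orderEmbOfFin h
  refine ⟨f 0, f 1, f 2, f 3, ?_, ?_, ?_, ?_⟩
  · exact f.strictMono (by decide)
  · exact f.strictMono (by decide)
  · exact f.strictMono (by decide)
  · have : Finset.image f Finset.univ = S := by
      apply Finset.coe_injective
      simp [f]
    rw [← this]
    ext z
    simp [Fin.exists_fin_succ, eq_comm]

lemma gale_classify {k : ℕ} (S : Finset ℕ) (hS : S ⊆ Finset.range (12 * k + 1))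
    (hc : S.card = 4) (hg : galeCond (12 * k + 1) S) : ∃ x y, vval k x y ∧ S = vset k x y := by
  obtain ⟨a, b, c, d, hab, hbc, hcd, rfl⟩ := sorted_four S hc
  have hd : d < 12 * k + 1 := by
    have : d ∈ ({a, b, c, d} : Finset ℕ) := by simp
    simpa using hS this
  have key : ∀ i j, j < 12 * k + 1 → i < j → (i ≠ a ∧ i ≠ b ∧ i ≠ c ∧ i ≠ d) →
      (j ≠ a ∧ j ≠ b ∧ j ≠ c ∧ j ≠ d) →
      ((if i < a ∧ a < j then 1 else 0) + (if i < b ∧ b < j then 1 else 0) +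
        (if i < c ∧ c < j then 1 else 0) + (if i < d ∧ d < j then 1 else 0)) % 2 = 0 := by
    intro i j hj hij hi' hj'
    have := hg i (by simp; omega) j (by simpa using hj) hij (by simp; omega) (by simp; omega)
    rw [card_filter_four _ _ _ _ (by omega) (by omega) (by omega) (by omega) (by omega) (by omega),
      Nat.even_iff] at this
    exact this
  have main : (b = a + 1 ∧ d = c + 1) ∨ (a = 0 ∧ d = 12 * k ∧ c = b + 1) := by
    by_contra hcon
    by_cases ha : a = 0
    · by_cases hb : b = 1
      · by_cases hc2 : c = 2
        · have := key 3 (d + 1) (by omega) (by omega) (by omega) (by omega)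
          split_ifs at this <;> omega
        · have := key (c - 1) (c + 1) (by omega) (by omega) (by omega) (by omega)
          split_ifs at this <;> omega
      · by_cases hdN : d = 12 * k
        · have := key (b - 1) (b + 1) (by omega) (by omega) (by omega) (by omega)
          split_ifs at this <;> omega
        · have := key 1 (d + 1) (by omega) (by omega) (by omega) (by omega)
          split_ifs at this <;> omega
    · by_cases hb : b = a + 1
      · have := key (a - 1) (c + 1) (by omega) (by omega) (by omega) (by omega)
        split_ifs at this <;> omega
      · have := key (a - 1) (a + 1) (by omega) (by omega) (by omega) (by omega)
        split_ifs at this <;> omega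
  rcases main with ⟨h1, h2⟩ | ⟨h1, h2, h3⟩
  · refine ⟨a, c, ?_, ?_⟩
    · unfold vval; omega
    · ext z
      rw [mem_vset]
      simp only [Finset.mem_insert, Finset.mem_singleton]
      omega
  · refine ⟨b, d, ?_, ?_⟩
    · unfold vval; omega
    · ext z
      rw [mem_vset]
      simp only [Finset.mem_insert, Finset.mem_singleton]
      omega

lemma coord_exists {k : ℕ} (v : DCVert (12 * k + 1)) :
    ∃ p : ℕ × ℕ, vval k p.1 p.2 ∧ v.1 = vset k p.1 p.2 := by
  obtain ⟨x, y, h⟩ := gale_classify v.1 v.2.1 v.2.2.1 v.2.2.2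
  exact ⟨(x, y), h⟩

noncomputable def cX {k : ℕ} (v : DCVert (12 * k + 1)) : ℕ := (coord_exists v).choose.1
noncomputable def cY {k : ℕ} (v : DCVert (12 * k + 1)) : ℕ := (coord_exists v).choose.2

lemma c_val {k : ℕ} (v : DCVert (12 * k + 1)) : vval k (cX v) (cY v) :=
  (coord_exists v).choose_spec.1
lemma c_set {k : ℕ} (v : DCVert (12 * k + 1)) : v.1 = vset k (cX v) (cY v) :=
  (coord_exists v).choose_spec.2

lemma c_ext {k : ℕ} {v w : DCVert (12 * k + 1)} (hx : cX v = cX w) (hy : cY v = cY w) :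
    v = w := by
  apply Subtype.ext
  rw [c_set v, c_set w, hx, hy]

lemma c_mk {k x y : ℕ} (h : vval k x y) :
    ∃ v : DCVert (12 * k + 1), cX v = x ∧ cY v = y := by
  refine ⟨⟨vset k x y, vset_sub h, vset_card h, vset_gale h⟩, ?_⟩
  exact vset_inj (c_val _) h (c_set _).symm

lemma c_mem {k : ℕ} (v : DCVert (12 * k + 1)) (e : ℕ) : e ∈ v.1 ↔
    e = cX v ∨ e = cX v + 1 ∨ e = cY v ∨ (cY v = 12 * k ∧ e = 0) ∨
      (cY v ≠ 12 * k ∧ e = cY v + 1) := by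
  rw [c_set v, mem_vset]

/-- number of common elements, as an arithmetic expression -/
lemma inter_card {k x y : ℕ} (h : vval k x y) (S : Finset ℕ) :
    (vset k x y ∩ S).card =
      (if x ∈ S then 1 else 0) + (if x + 1 ∈ S then 1 else 0) + (if y ∈ S then 1 else 0)
        + (if (if y = 12 * k then 0 else y + 1) ∈ S then 1 else 0) := by
  rw [← vset_card_filter h (fun e => e ∈ S), Finset.filter_mem_eq_inter]

lemma adj_iff {k : ℕ} {v w : DCVert (12 * k + 1)} (hv : cY v < 12 * k) (hw : cY w < 12 * k) :
    (v.1 ∩ w.1).card = 3 ↔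
      (cX v = cX w ∧ (cY v = cY w + 1 ∨ cY w = cY v + 1)) ∨
      (cY v = cY w ∧ (cX v = cX w + 1 ∨ cX w = cX v + 1)) ∨
      (cY v = cX v + 2 ∧ cY w = cX w + 2 ∧ (cX v = cX w + 1 ∨ cX w = cX v + 1)) := by
  have h1 := c_val v
  have h2 := c_val w
  rw [c_set v, inter_card h1]
  simp only [c_mem w]
  unfold vval at h1 h2
  rw [if_neg (by omega : ¬ cY v = 12 * k)]
  generalize cX v = x at *
  generalize cY v = y at *
  generalize cX w = x' at *
  generalize cY w = y' at *
  split_ifs <;> omega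

lemma adj_wrap {k : ℕ} {v w : DCVert (12 * k + 1)} (hv : cY v = 12 * k)
    (h : (cY w = 12 * k ∧ cX w = cX v + 1) ∨
      (cY w = 12 * k - 1 ∧ cX w = cX v ∧ cX v + 3 ≤ 12 * k) ∨
      (cX v + 2 = 12 * k ∧ cX w + 3 = 12 * k ∧ cY w + 1 = 12 * k) ∨
      (cX w = 0 ∧ cY w = cX v ∧ 2 ≤ cX v) ∨
      (cX v = 1 ∧ cX w = 0 ∧ cY w = 2) ∨
      (cX v + 2 = 12 * k ∧ cX w = 0 ∧ cY w + 1 = 12 * k) ∨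
      (cX v = 1 ∧ cX w = 0 ∧ cY w + 1 = 12 * k)) : (v.1 ∩ w.1).card = 3 := by
  have h1 := c_val v
  have h2 := c_val w
  rw [c_set v, inter_card h1]
  simp only [c_mem w]
  unfold vval at h1 h2
  rw [if_pos hv]
  generalize cX v = x at *
  generalize cY v = y at *
  generalize cX w = x' at *
  generalize cY w = y' at *
  split_ifs <;> try omega
  all_goals
    simp only [and_false, or_false, false_or] at *
    omega

/-! ### The orientation -/

/-- peeling time of a line -/
def tau (k x : ℕ) : ℕ :=
  if x < 6 * k then 12 * (x / 6) + x % 6 + 1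
  else if x < 12 * k then 12 * ((12 * k - 1 - x) / 6) + 6 + (12 * k - 1 - x) % 6 + 1 else 0

/-- lines which are traversed from left to right -/
def rgt (k x : ℕ) : Prop :=
  (x < 6 * k ∧ 2 ≤ x % 6) ∨ (6 * k ≤ x ∧ x < 12 * k ∧ (12 * k - 1 - x) % 6 < 2) ∨ 12 * k ≤ x

open Classical in
noncomputable def posn (k x y : ℕ) : ℕ := if rgt k x then y else 12 * k - y

noncomputable def fT (k x y : ℕ) : ℕ := min (tau k x) (tau k y)

noncomputable def fP (k x y : ℕ) : ℕ := if tau k x < tau k y then posn k x y else posn k y x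

/-- lexicographic comparison of the values of the height function -/
def fLt (k x y x' y' : ℕ) : Prop :=
  fT k x y < fT k x' y' ∨ (fT k x y = fT k x' y' ∧ fP k x y < fP k x' y')

noncomputable def fF {k : ℕ} (v : DCVert (12 * k + 1)) : ℕ ×ₗ ℕ :=
  toLex (fT k (cX v) (cY v), fP k (cX v) (cY v))

lemma fF_lt {k : ℕ} {v w : DCVert (12 * k + 1)} :
    fF v < fF w ↔ fLt k (cX v) (cY v) (cX w) (cY w) := by
  unfold fF fLt
  rw [Prod.Lex.toLex_lt_toLex]

def orD (k : ℕ) (v w : DCVert (12 * k + 1)) : Prop := (v.1 ∩ w.1).card = 3 ∧ fF v < fF w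

lemma tau_left {k x y : ℕ} (h : x < y) (hy : y < 6 * k) : tau k x < tau k y := by
  unfold tau; split_ifs <;> omega

lemma tau_right {k x y : ℕ} (h : x < y) (hx : 6 * k ≤ x) (hy : y ≤ 12 * k) :
    tau k y < tau k x := by
  unfold tau; split_ifs <;> omega

lemma tau_zero {k : ℕ} : tau k (12 * k) = 0 := by
  unfold tau; split_ifs <;> omega

lemma tau_pos {k x : ℕ} (hx : x < 12 * k) : 0 < tau k x := by
  unfold tau; split_ifs <;> omega

lemma tau_ne {k x y : ℕ} (h : x < y) (hy : y ≤ 12 * k) : tau k x ≠ tau k y := by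
  unfold tau; split_ifs <;> omega

lemma tau_between {k x y z : ℕ} (h1 : x ≤ y) (h2 : y ≤ z) (hz : z ≤ 12 * k) :
    tau k x ≤ tau k y ∨ tau k z ≤ tau k y := by
  rcases Nat.lt_or_ge y (6 * k) with h | h
  · left
    rcases Nat.eq_or_lt_of_le h1 with rfl | h3
    · exact le_rfl
    · exact (tau_left h3 h).le
  · right
    rcases Nat.eq_or_lt_of_le h2 with rfl | h3
    · exact le_rfl
    · exact (tau_right h3 h hz).le

/-- the smaller-index line is the earlier one: it lies on the left -/
lemma left_of_lt {k x y : ℕ} (hxy : x < y) (hy : y ≤ 12 * k) (h : tau k x < tau k y) :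
    x < 6 * k := by
  by_contra hc
  have := tau_right hxy (by omega) hy
  omega

lemma right_of_lt {k x y : ℕ} (hxy : x < y) (h : tau k y < tau k x) : 6 * k ≤ y := by
  by_contra hc
  have := tau_left hxy (by omega : y < 6 * k)
  omega

lemma fT_fP_left {k x y : ℕ} (h : tau k x < tau k y) :
    fT k x y = tau k x ∧ fP k x y = posn k x y := by
  unfold fT fP
  rw [if_pos h]
  omega

lemma fT_fP_right {k x y : ℕ} (h : tau k y < tau k x) :
    fT k x y = tau k y ∧ fP k x y = posn k y x := by
  unfold fT fP
  rw [if_neg (by omega)]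
  omega

lemma fT_fP {k x y : ℕ} (h : vval k x y) :
    (tau k x < tau k y ∧ fT k x y = tau k x ∧ fP k x y = posn k x y ∧ x < 6 * k) ∨
    (tau k y < tau k x ∧ fT k x y = tau k y ∧ fP k x y = posn k y x ∧ 6 * k ≤ y) := by
  unfold vval at h
  rcases Nat.lt_or_gt_of_ne (tau_ne (show x < y by omega) h.2.1) with h1 | h1
  · exact Or.inl ⟨h1, (fT_fP_left h1).1, (fT_fP_left h1).2, left_of_lt (by omega) h.2.1 h1⟩
  · exact Or.inr ⟨h1, (fT_fP_right h1).1, (fT_fP_right h1).2, right_of_lt (by omega) h1⟩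

lemma tau_inj {k x y : ℕ} (hx : x ≤ 12 * k) (hy : y ≤ 12 * k) (h : tau k x = tau k y) :
    x = y := by
  by_contra hc
  rcases Nat.lt_or_gt_of_ne hc with h1 | h1
  · exact tau_ne h1 hy h
  · exact tau_ne h1 hx h.symm

lemma posn_cases (k x y : ℕ) :
    (rgt k x ∧ posn k x y = y) ∨ (¬ rgt k x ∧ posn k x y = 12 * k - y) := by
  unfold posn
  split_ifs with h
  · exact Or.inl ⟨h, rfl⟩
  · exact Or.inr ⟨h, rfl⟩

lemma posn_inj {k x y z : ℕ} (hy : y ≤ 12 * k) (hz : z ≤ 12 * k) (h : posn k x y = posn k x z) :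
    y = z := by
  rcases posn_cases k x y with h1 | h1 <;> rcases posn_cases k x z with h2 | h2
  · omega
  · exact absurd h1.1 h2.1
  · exact absurd h2.1 h1.1
  · omega

lemma fF_inj {k : ℕ} {v w : DCVert (12 * k + 1)} (h : fF v = fF w) : v = w := by
  have h1 : fT k (cX v) (cY v) = fT k (cX w) (cY w) ∧ fP k (cX v) (cY v) = fP k (cX w) (cY w) := by
    unfold fF at h
    simpa using h
  have hv := c_val v
  have hw := c_val w
  obtain ⟨hT, hP⟩ := h1
  rcases fT_fP hv with ⟨a1, a2, a3, a4⟩ | ⟨a1, a2, a3, a4⟩ <;>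
  rcases fT_fP hw with ⟨b1, b2, b3, b4⟩ | ⟨b1, b2, b3, b4⟩ <;>
  unfold vval at hv hw <;> rw [a2, b2] at hT <;> rw [a3, b3] at hP
  · have e := tau_inj (by omega) (by omega) hT
    rw [e] at hP
    exact c_ext e (posn_inj (by omega) (by omega) hP)
  · have e := tau_inj (by omega) (by omega) hT
    rw [e] at hP
    omega
  · have e := tau_inj (by omega) (by omega) hT
    rw [e] at hP
    omega
  · have e := tau_inj (by omega) (by omega) hT
    rw [e] at hP
    exact c_ext (posn_inj (by omega) (by omega) hP) e

set_option maxHeartbeats 8000000 in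
/-- Key exchange lemma: a vertex `w` lower than `v` has an improving neighbour which
keeps all the facets common to `v` and `w`. -/
lemma key_exchange {k : ℕ} (v w : DCVert (12 * k + 1)) (h : fF w < fF v) :
    ∃ w', orD k w w' ∧ ∀ e, e ∈ w.1 → e ∈ v.1 → e ∈ w'.1 := by
  have hv := c_val v
  have hw := c_val w
  -- it suffices to give coordinates
  have give : ∀ x y, vval k x y →
      (∀ w' : DCVert (12 * k + 1), cX w' = x → cY w' = y → (w.1 ∩ w'.1).card = 3) →
      fLt k (cX w) (cY w) x y →
      (∀ e, e ∈ w.1 → e ∈ v.1 → e ∈ vset k x y) →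
      ∃ w', orD k w w' ∧ ∀ e, e ∈ w.1 → e ∈ v.1 → e ∈ w'.1 := by
    intro x y hxy h1 h2 h3
    obtain ⟨w', rfl, rfl⟩ := c_mk hxy
    refine ⟨w', ⟨h1 w' rfl rfl, fF_lt.2 h2⟩, ?_⟩
    rw [c_set w']
    exact h3
  rw [fF_lt] at h
  simp only [c_mem, mem_vset] at give ⊢
  by_cases hN : cY w = 12 * k
  · have t0 : fT k (cX w) (cY w) = 0 := by
      unfold fT; rw [hN, tau_zero]; simp
    have tp : ∀ x y, x < y → y < 12 * k → fLt k (cX w) (cY w) x y := by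
      intro x y hxy hy
      left
      rw [t0]
      unfold fT
      exact lt_min (tau_pos (by omega)) (tau_pos hy)
    have step : cX w + 3 ≤ 12 * k → fLt k (cX w) (cY w) (cX w + 1) (12 * k) := by
      intro h3
      right
      have q1 : tau k (12 * k) < tau k (cX w) := by rw [tau_zero]; exact tau_pos (by omega)
      have q2 : tau k (12 * k) < tau k (cX w + 1) := by rw [tau_zero]; exact tau_pos (by omega)
      rw [hN, (fT_fP_right q1).1, (fT_fP_right q1).2, (fT_fP_right q2).1, (fT_fP_right q2).2]
      have r : rgt k (12 * k) := by unfold rgt; omega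
      unfold posn
      rw [if_pos r, if_pos r]
      omega
    have aw : ∀ w' : DCVert (12 * k + 1), _ := fun w' => adj_wrap (w := w') hN
    unfold vval at hv hw give
    by_cases c0 : 0 ∈ v.1
    · by_cases cN : 12 * k ∈ v.1
      · rw [c_mem] at c0 cN
        by_cases hvN : cY v = 12 * k
        · have hlt : cX w < cX v := by
            rcases h with h | ⟨-, h⟩
            · rw [t0] at h
              unfold fT at h
              rw [hvN, tau_zero] at h
              simp at h
            · have q1 : tau k (12 * k) < tau k (cX w) := by
                rw [tau_zero]; exact tau_pos (by omega)
              have q2 : tau k (12 * k) < tau k (cX v) := by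
                rw [tau_zero]; exact tau_pos (by omega)
              rw [hN, hvN, (fT_fP_right q1).2, (fT_fP_right q2).2] at h
              have r : rgt k (12 * k) := by unfold rgt; omega
              unfold posn at h
              rw [if_pos r, if_pos r] at h
              exact h
          apply give (cX w + 1) (12 * k) (by omega)
          · intro w' h1 h2
            apply aw; omega
          · apply step; omega
          · intro e; omega
        · have hv0 : cX v = 0 ∧ cY v + 1 = 12 * k := by omega
          by_cases c1 : cX w = 1 ∨ cX w + 2 = 12 * k
          · apply give 0 (12 * k - 1) (by omega)
            · intro w' h1 h2
              apply aw; omega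
            · apply tp <;> omega
            · intro e; omega
          · apply give (cX w + 1) (12 * k) (by omega)
            · intro w' h1 h2
              apply aw; omega
            · apply step; omega
            · intro e; omega
      · rw [c_mem] at c0 cN
        by_cases c1 : cX w = 1
        · apply give 0 2 (by omega)
          · intro w' h1 h2
            apply aw; omega
          · apply tp <;> omega
          · intro e; omega
        · apply give 0 (cX w) (by omega)
          · intro w' h1 h2
            apply aw; omega
          · apply tp <;> omega
          · intro e; omega
    · rw [c_mem] at c0
      by_cases c1 : cX w + 2 = 12 * k
      · apply give (12 * k - 3) (12 * k - 1) (by omega)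
        · intro w' h1 h2
          apply aw; omega
        · apply tp <;> omega
        · intro e; omega
      · apply give (cX w) (12 * k - 1) (by omega)
        · intro w' h1 h2
          apply aw; omega
        · apply tp <;> omega
        · intro e; omega
  · have hN' : cY w < 12 * k := by unfold vval at hw; omega
    have aw : ∀ w' : DCVert (12 * k + 1), cY w' < 12 * k → _ :=
      fun w' h' => (adj_iff (w := w') hN' h').2
    rcases fT_fP hw with ⟨a1, a2, a3, a4⟩ | ⟨a1, a2, a3, a4⟩
    · -- the earlier line is `cX w`, on the left
      have hT : tau k (cX w) ≤ fT k (cX v) (cY v) := by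
        unfold fLt at h; omega
      have hT1 : tau k (cX w) ≤ tau k (cX v) ∧ tau k (cX w) ≤ tau k (cY v) := by
        unfold fT at hT; omega
      by_cases c0 : cX w ∈ v.1
      · -- then `v` lies on the same line
        have hx : cX v = cX w := by
          rw [c_mem] at c0
          unfold vval at hv hw
          by_contra hne
          by_cases h1 : cX v < cX w
          · have := tau_left h1 a4
            omega
          · have h2 : cY v = 12 * k := by omega
            rw [h2, tau_zero] at hT1
            have := tau_pos (k := k) (x := cX w) (by omega)
            omega
        have hyv : cY v ≠ 12 * k := by
          intro h2
          rw [h2, tau_zero] at hT1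
          have := tau_pos (k := k) (x := cX w) (by unfold vval at hw; omega)
          omega
        have hlt : tau k (cX w) < tau k (cY v) := by
          have := tau_ne (k := k) (x := cX v) (y := cY v) (by unfold vval at hv; omega)
            (by unfold vval at hv; omega)
          rw [hx] at this
          omega
        have hp : posn k (cX w) (cY w) < posn k (cX w) (cY v) := by
          unfold fLt at h
          rw [hx, (fT_fP_left hlt).1, (fT_fP_left hlt).2, a2, a3] at h
          omega
        unfold vval at hv hw give
        have later : ∀ y, (cY w ≤ y ∧ y ≤ cY v) ∨ (cY v ≤ y ∧ y ≤ cY w) →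
            tau k (cX w) < tau k y := by
          intro y hy
          rcases hy with hy | hy
          · rcases tau_between (k := k) hy.1 hy.2 (by omega) with h | h <;> omega
          · rcases tau_between (k := k) hy.1 hy.2 (by omega) with h | h <;> omega
        have stepf : ∀ y, tau k (cX w) < tau k y → posn k (cX w) (cY w) < posn k (cX w) y →
            fLt k (cX w) (cY w) (cX w) y := by
          intro y h1 h2
          right
          rw [(fT_fP_left h1).1, (fT_fP_left h1).2, a2, a3]
          exact ⟨rfl, h2⟩
        by_cases r : rgt k (cX w)
        · unfold posn at hp stepf
          rw [if_pos r, if_pos r] at hp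
          apply give (cX w) (cY w + 1) (by omega)
          · intro w' h1 h2
            apply aw <;> omega
          · apply stepf
            · apply later; omega
            · rw [if_pos r, if_pos r]; omega
          · intro e; omega
        · unfold posn at hp stepf
          rw [if_neg r, if_neg r] at hp
          apply give (cX w) (cY w - 1) (by omega)
          · intro w' h1 h2
            apply aw <;> omega
          · apply stepf
            · apply later; omega
            · rw [if_neg r, if_neg r]; omega
          · intro e; omega
      · rw [c_mem] at c0
        have hnext : tau k (cX w) < tau k (cX w + 1) := by
          clear give aw
          unfold vval at hw
          by_cases h1 : cX w + 1 < 6 * k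
          · exact tau_left (by omega) h1
          · unfold tau; split_ifs <;> omega
        by_cases c1 : cY w = cX w + 2
        · have h3 : tau k (cX w) < tau k (cX w + 3) ∧ cX w + 3 < 12 * k := by
            clear give aw
            unfold vval at hw
            by_cases h1 : cX w + 3 < 6 * k
            · exact ⟨tau_left (by omega) h1, by omega⟩
            · refine ⟨?_, by omega⟩
              unfold tau; split_ifs <;> omega
          unfold vval at hv hw give
          apply give (cX w + 1) (cX w + 3) (by omega)
          · intro w' h1 h2
            apply aw <;> omega
          · left
            rw [a2]
            unfold fT
            exact lt_min hnext h3.1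
          · intro e; omega
        · unfold vval at hv hw give
          apply give (cX w + 1) (cY w) (by omega)
          · intro w' h1 h2
            apply aw <;> omega
          · left
            rw [a2]
            unfold fT
            exact lt_min hnext a1
          · intro e; omega
    · -- the earlier line is `cY w`, on the right
      have hT : tau k (cY w) ≤ fT k (cX v) (cY v) := by
        unfold fLt at h; omega
      have hT1 : tau k (cY w) ≤ tau k (cX v) ∧ tau k (cY w) ≤ tau k (cY v) := by
        unfold fT at hT; omega
      have hyv : cY v ≠ 12 * k := by
        intro h2
        rw [h2, tau_zero] at hT1
        have := tau_pos hN'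
        omega
      have hyle : cY v ≤ cY w := by
        by_contra hc
        have := tau_right (k := k) (x := cY w) (y := cY v) (by omega) a4
          (by unfold vval at hv; omega)
        omega
      by_cases c0 : cY w + 1 ∈ v.1
      · have hy : cY v = cY w := by
          rw [c_mem] at c0
          unfold vval at hv hw
          omega
        have hlt : tau k (cY w) < tau k (cX v) := by
          have := tau_ne (k := k) (x := cX v) (y := cY v) (by unfold vval at hv; omega)
            (by unfold vval at hv; omega)
          rw [hy] at this
          omega
        have hp : posn k (cY w) (cX w) < posn k (cY w) (cX v) := by
          unfold fLt at h
          rw [hy, (fT_fP_right hlt).1, (fT_fP_right hlt).2, a2, a3] at h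
          omega
        unfold vval at hv hw give
        have later : ∀ y, (cX w ≤ y ∧ y ≤ cX v) ∨ (cX v ≤ y ∧ y ≤ cX w) →
            tau k (cY w) < tau k y := by
          intro y hy
          rcases hy with hy | hy
          · rcases tau_between (k := k) hy.1 hy.2 (by omega) with h | h <;> omega
          · rcases tau_between (k := k) hy.1 hy.2 (by omega) with h | h <;> omega
        have stepf : ∀ x, tau k (cY w) < tau k x → posn k (cY w) (cX w) < posn k (cY w) x →
            fLt k (cX w) (cY w) x (cY w) := by
          intro y h1 h2
          right
          rw [(fT_fP_right h1).1, (fT_fP_right h1).2, a2, a3]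
          exact ⟨rfl, h2⟩
        by_cases r : rgt k (cY w)
        · unfold posn at hp stepf
          rw [if_pos r, if_pos r] at hp
          apply give (cX w + 1) (cY w) (by omega)
          · intro w' h1 h2
            apply aw <;> omega
          · apply stepf
            · apply later; omega
            · rw [if_pos r, if_pos r]; omega
          · intro e; omega
        · unfold posn at hp stepf
          rw [if_neg r, if_neg r] at hp
          apply give (cX w - 1) (cY w) (by omega)
          · intro w' h1 h2
            apply aw <;> omega
          · apply stepf
            · apply later; omega
            · rw [if_neg r, if_neg r]; omega
          · intro e; omega
      · rw [c_mem] at c0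
        by_cases c1 : cY w = cX w + 2
        · by_cases c2 : cX w ≤ 6 * k
          · -- `w` is the global maximum
            exfalso
            unfold vval at hv hw
            have e1 : cX w = 6 * k := by
              clear give aw h
              by_contra hc
              have : tau k (cX w) < tau k (cY w) := by
                unfold tau; split_ifs <;> omega
              omega
            have e2 : cY w = 6 * k + 2 := by omega
            have e3 : cX v < 6 * k := by
              by_contra hc
              omega
            have : tau k (cX v) < tau k (cY w) := by
              clear give aw h
              rw [e2]
              unfold tau; split_ifs <;> omega
            omega
          · have hx3 := tau_right (k := k) (x := cY w - 1) (y := cY w) (by omega) (by omega)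
              (by omega)
            have hx4 : tau k (cY w) < tau k (cX w - 1) :=
              tau_right (by omega) (by omega) (by omega)
            unfold vval at hv hw give
            apply give (cX w - 1) (cY w - 1) (by omega)
            · intro w' h1 h2
              apply aw <;> omega
            · left
              rw [a2]
              unfold fT
              exact lt_min hx4 hx3
            · intro e; omega
        · have hnext : tau k (cY w) < tau k (cY w - 1) := by
            clear give aw h
            unfold vval at hw
            by_cases h1 : 6 * k ≤ cY w - 1
            · exact tau_right (by omega) h1 (by omega)
            · exfalso
              have : tau k (cX w) < tau k (cY w) := by
                unfold tau; split_ifs <;> omega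
              omega
          unfold vval at hv hw give
          apply give (cX w) (cY w - 1) (by omega)
          · intro w' h1 h2
            apply aw <;> omega
          · left
            rw [a2]
            unfold fT
            exact lt_min a1 hnext
          · intro e; omega


/-! ### The orientation is an acyclic unique sink orientation -/

lemma dc_finite (n : ℕ) : Finite (DCVert n) := by
  have : Set.Finite {S : Finset ℕ | S ⊆ Finset.range n ∧ S.card = 4 ∧ galeCond n S} := by
    apply Set.Finite.subset (Finset.finite_toSet (Finset.range n).powerset)
    intro S hS
    simp only [Finset.coe_powerset, Set.mem_preimage, Set.mem_powerset_iff, Finset.coe_subset]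
    exact hS.1
  exact this.to_subtype

lemma orD_adj {k : ℕ} (v w : DCVert (12 * k + 1)) :
    (v.1 ∩ w.1).card = 3 ↔ (orD k v w ∨ orD k w v) := by
  constructor
  · intro h
    have hne : v ≠ w := by
      rintro rfl
      rw [Finset.inter_self, v.2.2.1] at h
      omega
    rcases lt_trichotomy (fF v) (fF w) with h1 | h1 | h1
    · exact Or.inl ⟨h, h1⟩
    · exact absurd (fF_inj h1) hne
    · exact Or.inr ⟨by rw [Finset.inter_comm]; exact h, h1⟩
  · rintro (h | h)
    · exact h.1
    · rw [Finset.inter_comm]; exact h.1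

lemma orD_trans {k : ℕ} {v w : DCVert (12 * k + 1)} (h : Relation.TransGen (orD k) v w) :
    fF v < fF w := by
  induction h with
  | single h => exact h.2
  | tail _ h ih => exact ih.trans h.2

/-- a sink of a face is the unique highest vertex of that face -/
lemma sink_eq {k : ℕ} {T : Finset ℕ} {u u0 : DCVert (12 * k + 1)} (hu : T ⊆ u.1)
    (hs : ∀ w, T ⊆ w.1 → ¬ orD k u w) (h0 : T ⊆ u0.1)
    (hmax : ∀ w : DCVert (12 * k + 1), T ⊆ w.1 → ¬ fF u0 < fF w) : u = u0 := by
  by_contra hne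
  have h1 : fF u < fF u0 :=
    lt_of_le_of_ne (not_lt.1 (hmax u hu)) (fun h => hne (fF_inj h))
  obtain ⟨w', h2, h3⟩ := key_exchange u0 u h1
  exact hs w' (fun e he => h3 e (hu he) (h0 he)) h2

lemma exists_sink {k : ℕ} (T : Finset ℕ) (h : ∃ v : DCVert (12 * k + 1), T ⊆ v.1) :
    ∃! t : DCVert (12 * k + 1), T ⊆ t.1 ∧ ∀ w, T ⊆ w.1 → ¬ orD k t w := by
  have := dc_finite (12 * k + 1)
  obtain ⟨t, ht, hmax⟩ := Set.exists_max_image {v : DCVert (12 * k + 1) | T ⊆ v.1} fF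
    (Set.toFinite _) h
  refine ⟨t, ⟨ht, fun w hw hD => ?_⟩, ?_⟩
  · exact absurd hD.2 (not_lt.2 (hmax w hw))
  · rintro u ⟨hu, hs⟩
    exact sink_eq hu hs ht (fun w hw => not_lt.2 (hmax w hw))

lemma out_of_lt {k : ℕ} {v u : DCVert (12 * k + 1)} (h : fF v < fF u) :
    ∃ w, orD k v w := by
  obtain ⟨w, h1, -⟩ := key_exchange u v h
  exact ⟨w, h1⟩

/-! ### General facts on runs -/

lemma run_sink {n : ℕ} {D : DCVert n → DCVert n → Prop} {T : Finset ℕ} {v s : DCVert n}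
    {l : List (DCVert n)} (h : RFRun n D T v s l) :
    T ⊆ s.1 ∧ ∀ w, T ⊆ w.1 → ¬ D s w := by
  induction h with
  | sink T v hv h => exact ⟨hv, h⟩
  | follow T v w s l hv hvw hw huniq h ih => exact ih
  | facet T v u s l₁ l₂ i hv hi hiT hout hmulti h₁ h₂ ih₁ ih₂ => exact ih₂

lemma fT_le {k : ℕ} {v w : DCVert (12 * k + 1)} (h : fF v < fF w) :
    fT k (cX v) (cY v) ≤ fT k (cX w) (cY w) := by
  rw [fF_lt] at h
  unfold fLt at h
  omega

lemma nonwrap_of_lt {k : ℕ} {v w : DCVert (12 * k + 1)} (h : fF v < fF w) (hv : cY v < 12 * k) :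
    cY w < 12 * k := by
  have h1 := fT_le h
  have h2 := c_val v
  have h3 := c_val w
  unfold vval at h2 h3
  have t1 := tau_pos (k := k) (x := cX v) (by omega)
  have t2 := tau_pos hv
  have : tau k (cY w) ≠ 0 := by
    unfold fT at h1
    omega
  have : cY w ≠ 12 * k := by
    intro h
    rw [h, tau_zero] at this
    exact this rfl
  omega

lemma run_len {k : ℕ} {T : Finset ℕ} {v s : DCVert (12 * k + 1)}
    {l : List (DCVert (12 * k + 1))} (h : RFRun (12 * k + 1) (orD k) T v s l) :
    1 ≤ l.length ∧ (cY v < 12 * k → cY s < 12 * k ∧ cX s < cX v + l.length ∧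
      cX v < cX s + l.length ∧ cY s < cY v + l.length ∧ cY v < cY s + l.length) := by
  induction h with
  | sink T v hv h => simp
  | follow T v w s l hv hvw hw huniq h ih =>
    rw [List.length_cons]
    refine ⟨by omega, fun h0 => ?_⟩
    have h1 := nonwrap_of_lt hvw.2 h0
    have h2 := (adj_iff h0 h1).1 hvw.1
    have h3 := ih.2 h1
    omega
  | facet T v u s l₁ l₂ i hv hi hiT hout hmulti h₁ h₂ ih₁ ih₂ =>
    rw [List.length_append, List.length_tail]
    refine ⟨by omega, fun h0 => ?_⟩
    have h1 := ih₁.2 h0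
    have h2 := ih₂.2 h1.1
    omega

/-! ### Sinks of facets -/

lemma tau_l {k x : ℕ} (a r : ℕ) (h : x = 6 * a + r) (hr : r < 6) (hx : x < 6 * k) :
    tau k x = 12 * a + r + 1 := by
  unfold tau; rw [if_pos hx]; omega

lemma tau_r {k x : ℕ} (a r : ℕ) (h : x + 1 + 6 * a + r = 12 * k) (hr : r < 6)
    (hx : 6 * k ≤ x) : tau k x = 12 * a + r + 7 := by
  unfold tau; rw [if_neg (by omega), if_pos (by omega)]; omega

lemma left_facet {k i : ℕ} {u : DCVert (12 * k + 1)} (hi : i < 6 * k) (hu : i ∈ u.1)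
    (hs : ∀ w : DCVert (12 * k + 1), i ∈ w.1 → ¬ orD k u w) (hk : 4 ≤ k) :
    cX u = i ∧ ((i % 6 < 2 ∧ cY u = i + 2) ∨ (2 ≤ i % 6 ∧ cY u + 1 + 6 * (i / 6) = 12 * k)) := by
  obtain ⟨y0, hy0⟩ : ∃ y0, (i % 6 < 2 ∧ y0 = i + 2) ∨
      (2 ≤ i % 6 ∧ y0 + 1 + 6 * (i / 6) = 12 * k) := by
    by_cases h : i % 6 < 2
    · exact ⟨i + 2, Or.inl ⟨h, rfl⟩⟩
    · exact ⟨12 * k - 1 - 6 * (i / 6), Or.inr ⟨by omega, by omega⟩⟩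
  have hval : vval k i y0 := by unfold vval; omega
  have hy0N : y0 < 12 * k := by omega
  obtain ⟨u0, hx, hy⟩ := c_mk hval
  have hti : tau k i = 12 * (i / 6) + i % 6 + 1 := by unfold tau; rw [if_pos hi]
  have hty : tau k i < tau k y0 := by
    rw [hti]
    unfold tau
    split_ifs <;> omega
  have : u = u0 := by
    apply sink_eq (T := {i}) (by simpa using hu)
    · intro w hw
      exact hs w (by simpa using hw)
    · have : i ∈ u0.1 := by rw [c_mem]; omega
      simpa using this
    · intro w hw
      rw [Finset.singleton_subset_iff, c_mem] at hw
      intro hlt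
      have hle := fT_le hlt
      have hw1 := nonwrap_of_lt hlt (by omega)
      have hwv := c_val w
      unfold vval at hwv
      rw [fF_lt, hx, hy] at hlt
      rw [hx, hy, (fT_fP_left hty).1] at hle
      have hle1 : tau k i ≤ tau k (cX w) ∧ tau k i ≤ tau k (cY w) := by
        unfold fT at hle; omega
      have hxw : cX w = i := by
        by_contra hne
        have h1 : cX w < i := by omega
        have := tau_left h1 hi
        omega
      have hlt2 : tau k i < tau k (cY w) := by
        have := tau_ne (k := k) (x := i) (y := cY w) (by omega) (by omega)
        omega
      have hp : posn k i y0 < posn k i (cY w) := by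
        unfold fLt at hlt
        rw [hxw, (fT_fP_left hty).1, (fT_fP_left hty).2, (fT_fP_left hlt2).1,
          (fT_fP_left hlt2).2] at hlt
        omega
      rcases hy0 with ⟨h1, h2⟩ | ⟨h1, h2⟩
      · have r : ¬ rgt k i := by unfold rgt; omega
        unfold posn at hp
        rw [if_neg r, if_neg r] at hp
        omega
      · have r : rgt k i := by unfold rgt; omega
        unfold posn at hp
        rw [if_pos r, if_pos r] at hp
        rw [hti] at hlt2
        unfold tau at hlt2
        split_ifs at hlt2 <;> omega
  rw [this, hx, hy]
  exact ⟨rfl, hy0⟩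

lemma right_facet {k i : ℕ} {u : DCVert (12 * k + 1)} (hi : 6 * k + 6 < i) (hi' : i ≤ 12 * k)
    (hu : i ∈ u.1) (hs : ∀ w : DCVert (12 * k + 1), i ∈ w.1 → ¬ orD k u w) (hk : 4 ≤ k) :
    cY u + 1 = i ∧ (((12 * k - i) % 6 < 2 ∧ cX u + 3 = i) ∨
      (2 ≤ (12 * k - i) % 6 ∧ cX u = 6 * ((12 * k - i) / 6) + 6)) := by
  obtain ⟨x0, hx0⟩ : ∃ x0, ((12 * k - i) % 6 < 2 ∧ x0 + 3 = i) ∨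
      (2 ≤ (12 * k - i) % 6 ∧ x0 = 6 * ((12 * k - i) / 6) + 6) := by
    by_cases h : (12 * k - i) % 6 < 2
    · exact ⟨i - 3, Or.inl ⟨h, by omega⟩⟩
    · exact ⟨_, Or.inr ⟨by omega, rfl⟩⟩
  obtain ⟨j, rfl⟩ : ∃ j, i = j + 1 := ⟨i - 1, by omega⟩
  have hval : vval k x0 j := by unfold vval; omega
  obtain ⟨u0, hx, hy⟩ := c_mk hval
  have hti : tau k j = 12 * ((12 * k - (j + 1)) / 6) + (12 * k - (j + 1)) % 6 + 7 := by
    unfold tau; rw [if_neg (by omega), if_pos (by omega)]; omega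
  have hty : tau k j < tau k x0 := by
    rw [hti]
    unfold tau
    split_ifs <;> omega
  have : u = u0 := by
    apply sink_eq (T := {j + 1}) (by simpa using hu)
    · intro w hw
      exact hs w (by simpa using hw)
    · have : j + 1 ∈ u0.1 := by rw [c_mem]; omega
      simpa using this
    · intro w hw
      rw [Finset.singleton_subset_iff, c_mem] at hw
      intro hlt
      have hle := fT_le hlt
      have hw1 := nonwrap_of_lt hlt (by omega)
      have hwv := c_val w
      unfold vval at hwv
      rw [fF_lt, hx, hy] at hlt
      rw [hx, hy, (fT_fP_right hty).1] at hle
      have hle1 : tau k j ≤ tau k (cX w) ∧ tau k j ≤ tau k (cY w) := by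
        unfold fT at hle; omega
      have hxw : cY w = j := by
        by_contra hne
        have h1 : j < cY w := by omega
        have := tau_right (k := k) h1 (by omega) (by omega)
        omega
      have hlt2 : tau k j < tau k (cX w) := by
        have := tau_ne (k := k) (x := cX w) (y := j) (by omega) (by omega)
        omega
      have hp : posn k j x0 < posn k j (cX w) := by
        unfold fLt at hlt
        rw [hxw, (fT_fP_right hty).1, (fT_fP_right hty).2, (fT_fP_right hlt2).1,
          (fT_fP_right hlt2).2] at hlt
        omega
      rcases hx0 with ⟨h1, h2⟩ | ⟨h1, h2⟩
      · have r : rgt k j := by unfold rgt; omega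
        unfold posn at hp
        rw [if_pos r, if_pos r] at hp
        omega
      · have r : ¬ rgt k j := by unfold rgt; omega
        unfold posn at hp
        rw [if_neg r, if_neg r] at hp
        rw [hti] at hlt2
        unfold tau at hlt2
        split_ifs at hlt2 <;> omega
  rw [this, hx, hy]
  exact ⟨rfl, hx0⟩

/-! ### Improving neighbours -/

def nbr (x y x' y' : ℕ) : Prop :=
  (x = x' ∧ (y = y' + 1 ∨ y' = y + 1)) ∨ (y = y' ∧ (x = x' + 1 ∨ x' = x + 1)) ∨
    (y = x + 2 ∧ y' = x' + 2 ∧ (x = x' + 1 ∨ x' = x + 1))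

lemma up_left {k : ℕ} {v w : DCVert (12 * k + 1)} (hv : cY v < 12 * k)
    (hlt : tau k (cX v) < tau k (cY v)) (h : orD k v w) :
    cY w < 12 * k ∧ nbr (cX v) (cY v) (cX w) (cY w) ∧ tau k (cX v) ≤ tau k (cX w) ∧
      tau k (cX v) ≤ tau k (cY w) ∧
      (cX w = cX v → (rgt k (cX v) → cY v < cY w) ∧ (¬ rgt k (cX v) → cY w < cY v)) := by
  have h1 := nonwrap_of_lt h.2 hv
  have hle := fT_le h.2
  have hl := fF_lt.1 h.2
  rw [(fT_fP_left hlt).1] at hle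
  have hle1 : tau k (cX v) ≤ tau k (cX w) ∧ tau k (cX v) ≤ tau k (cY w) := by
    unfold fT at hle; omega
  refine ⟨h1, (adj_iff hv h1).1 h.1, hle1.1, hle1.2, fun hx => ?_⟩
  have hwv := c_val w
  unfold vval at hwv
  have hlt2 : tau k (cX v) < tau k (cY w) := by
    have := tau_ne (k := k) (x := cX v) (y := cY w) (by omega) (by omega)
    omega
  unfold fLt at hl
  rw [hx, (fT_fP_left hlt).1, (fT_fP_left hlt).2, (fT_fP_left hlt2).1,
    (fT_fP_left hlt2).2] at hl
  unfold posn at hl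
  constructor <;> intro r
  · rw [if_pos r, if_pos r] at hl; omega
  · rw [if_neg r, if_neg r] at hl; omega

lemma up_right {k : ℕ} {v w : DCVert (12 * k + 1)} (hv : cY v < 12 * k)
    (hlt : tau k (cY v) < tau k (cX v)) (h : orD k v w) :
    cY w < 12 * k ∧ nbr (cX v) (cY v) (cX w) (cY w) ∧ tau k (cY v) ≤ tau k (cX w) ∧
      tau k (cY v) ≤ tau k (cY w) ∧
      (cY w = cY v → (rgt k (cY v) → cX v < cX w) ∧ (¬ rgt k (cY v) → cX w < cX v)) := by
  have h1 := nonwrap_of_lt h.2 hv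
  have hle := fT_le h.2
  have hl := fF_lt.1 h.2
  rw [(fT_fP_right hlt).1] at hle
  have hle1 : tau k (cY v) ≤ tau k (cX w) ∧ tau k (cY v) ≤ tau k (cY w) := by
    unfold fT at hle; omega
  refine ⟨h1, (adj_iff hv h1).1 h.1, hle1.1, hle1.2, fun hx => ?_⟩
  have hwv := c_val w
  unfold vval at hwv
  have hlt2 : tau k (cY v) < tau k (cX w) := by
    have := tau_ne (k := k) (x := cX w) (y := cY v) (by omega) (by omega)
    omega
  unfold fLt at hl
  rw [hx, (fT_fP_right hlt).1, (fT_fP_right hlt).2, (fT_fP_right hlt2).1,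
    (fT_fP_right hlt2).2] at hl
  unfold posn at hl
  constructor <;> intro r
  · rw [if_pos r, if_pos r] at hl; omega
  · rw [if_neg r, if_neg r] at hl; omega

/-- improving neighbours given by coordinates -/
lemma up_mk {k x y : ℕ} {v : DCVert (12 * k + 1)} (hv : cY v < 12 * k) (hxy : x + 2 ≤ y)
    (hy : y < 12 * k) (hn : nbr (cX v) (cY v) x y) (hf : fLt k (cX v) (cY v) x y) :
    ∃ w, orD k v w ∧ cX w = x ∧ cY w = y := by
  obtain ⟨w, rfl, rfl⟩ := c_mk (k := k) (x := x) (y := y) ⟨hxy, hy.le, by omega⟩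
  exact ⟨w, ⟨(adj_iff hv hy).2 hn, fF_lt.2 hf⟩, rfl, rfl⟩


/-! ### The states visited by the algorithm -/

/-- states in which the algorithm has a unique improving edge -/
def StA (k b x y : ℕ) : Prop := ∃ a r,
  (b = 2 * a ∧ r < 2 ∧ x = 6 * a + r ∧ y = x + 2) ∨
  (b = 2 * a ∧ 2 ≤ r ∧ r < 6 ∧ x = 6 * a + r ∧ y + 1 + 6 * a = 12 * k) ∨
  (b = 2 * a + 1 ∧ r < 2 ∧ y + 1 + 6 * a + r = 12 * k ∧ y = x + 2) ∨
  (b = 2 * a + 1 ∧ 2 ≤ r ∧ r < 6 ∧ y + 1 + 6 * a + r = 12 * k ∧ x = 6 * a + 6)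

/-- states at the end of the near part of a block -/
def StN (k b x y : ℕ) : Prop := ∃ a,
  (b = 2 * a ∧ x = 6 * a + 2 ∧ y = x + 2) ∨
  (b = 2 * a + 1 ∧ y + 3 + 6 * a = 12 * k ∧ y = x + 2)

/-- states at the end of the far part of a block -/
def StF (k b x y : ℕ) : Prop := ∃ a,
  (b = 2 * a ∧ x = 6 * a + 6 ∧ y + 1 + 6 * a = 12 * k) ∨
  (b = 2 * a + 1 ∧ x = 6 * a + 6 ∧ y + 7 + 6 * a = 12 * k)

def St (k b x y : ℕ) : Prop := StA k b x y ∨ StN k b x y ∨ StF k b x y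

lemma St_facts {k b x y : ℕ} (h : St k b x y) (hb : b < k) (hk : 4 ≤ k) :
    y < 12 * k ∧ fT k x y < 12 * k - 2 := by
  have key : (x < 6 * k ∧ x ≤ 3 * k + 6 ∧ y < 12 * k) ∨ (9 * k < y + 6 ∧ y < 12 * k) := by
    rcases h with ⟨a, r, h⟩ | ⟨a, h⟩ | ⟨a, h⟩ <;> omega
  refine ⟨by omega, ?_⟩
  unfold fT
  rcases key with h | h
  · apply lt_of_le_of_lt (min_le_left _ _)
    unfold tau; rw [if_pos h.1]; omega
  · apply lt_of_le_of_lt (min_le_right _ _)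
    unfold tau; rw [if_neg (by omega), if_pos h.2]; omega

lemma St_out {k b : ℕ} {v : DCVert (12 * k + 1)} (h : St k b (cX v) (cY v)) (hb : b < k)
    (hk : 4 ≤ k) : ∃ w, orD k v w := by
  obtain ⟨u, hx, hy⟩ := c_mk (k := k) (x := 6 * k) (y := 6 * k + 2) (by unfold vval; omega)
  apply out_of_lt (u := u)
  rw [fF_lt]
  left
  have h1 := (St_facts h hb hk).2
  have h2 : fT k (6 * k) (6 * k + 2) = 12 * k - 2 := by
    unfold fT
    rw [tau_r (k - 1) 5 (by omega) (by omega) (by omega),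
      tau_r (k - 1) 3 (by omega) (by omega) (by omega)]
    omega
  rw [hx, hy, h2]
  exact h1

/-- at an `A`-state the improving neighbour is determined and is again a state -/
lemma StA_next {k b : ℕ} {v : DCVert (12 * k + 1)} (h : StA k b (cX v) (cY v)) (hb : b < k)
    (hk : 4 ≤ k) : ∃ x' y', St k b x' y' ∧ ∀ w, orD k v w → cX w = x' ∧ cY w = y' := by
  obtain ⟨a, r, h | h | h | h⟩ := h
  · obtain ⟨h1, h2, h3, h4⟩ := h
    refine ⟨cX v + 1, cX v + 3, ?_, ?_⟩
    · by_cases hr : r = 0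
      · exact Or.inl ⟨a, 1, Or.inl (by omega)⟩
      · exact Or.inr (Or.inl ⟨a, Or.inl (by omega)⟩)
    · intro w hw
      have hlt : tau k (cX v) < tau k (cY v) := tau_left (by omega) (by omega)
      obtain ⟨u1, u2, u3, u4, u5⟩ := up_left (by omega) hlt hw
      have hr : ¬ rgt k (cX v) := by unfold rgt; omega
      have hwv := c_val w
      unfold vval at hwv
      have hx : ¬ cX w < cX v := by
        intro hc
        have := tau_left (k := k) hc (by omega)
        omega
      have u6 := fun e => (u5 e).2 hr
      unfold nbr at u2
      omega
  · obtain ⟨h1, h2, h2', h3, h4⟩ := h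
    refine ⟨cX v + 1, cY v, ?_, ?_⟩
    · by_cases hr : r = 5
      · exact Or.inr (Or.inr ⟨a, Or.inl (by omega)⟩)
      · exact Or.inl ⟨a, r + 1, Or.inr (Or.inl (by omega))⟩
    · intro w hw
      have t1 := tau_l (k := k) (x := cX v) a r h3 h2' (by omega)
      have t2 := tau_r (k := k) (x := cY v) a 0 (by omega) (by omega) (by omega)
      obtain ⟨u1, u2, u3, u4, u5⟩ := up_left (by omega) (by omega) hw
      have hr : rgt k (cX v) := by unfold rgt; omega
      have hwv := c_val w
      unfold vval at hwv
      have hx : ¬ cX w < cX v := by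
        intro hc
        have := tau_left (k := k) hc (by omega)
        omega
      have hy : ¬ cY w = cY v + 1 := by
        intro hc
        have := tau_r (k := k) (x := cY w) (a - 1) 5 (by omega) (by omega) (by omega)
        omega
      have u6 := fun e => (u5 e).1 hr
      unfold nbr at u2
      omega
  · obtain ⟨h1, h2, h3, h4⟩ := h
    refine ⟨cX v - 1, cY v - 1, ?_, ?_⟩
    · by_cases hr : r = 0
      · exact Or.inl ⟨a, 1, Or.inr (Or.inr (Or.inl (by omega)))⟩
      · exact Or.inr (Or.inl ⟨a, Or.inr (by omega)⟩)
    · intro w hw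
      have hlt : tau k (cY v) < tau k (cX v) := tau_right (by omega) (by omega) (by omega)
      obtain ⟨u1, u2, u3, u4, u5⟩ := up_right (by omega) hlt hw
      have hr : rgt k (cY v) := by unfold rgt; omega
      have hwv := c_val w
      unfold vval at hwv
      have hx : ¬ cY v < cY w := by
        intro hc
        have := tau_right (k := k) hc (by omega) (by omega)
        omega
      have u6 := fun e => (u5 e).1 hr
      unfold nbr at u2
      omega
  · obtain ⟨h1, h2, h2', h3, h4⟩ := h
    refine ⟨cX v, cY v - 1, ?_, ?_⟩
    · by_cases hr : r = 5
      · exact Or.inr (Or.inr ⟨a, Or.inr (by omega)⟩)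
      · exact Or.inl ⟨a, r + 1, Or.inr (Or.inr (Or.inr (by omega)))⟩
    · intro w hw
      have t1 := tau_l (k := k) (x := cX v) (a + 1) 0 (by omega) (by omega) (by omega)
      have t2 := tau_r (k := k) (x := cY v) a r (by omega) (by omega) (by omega)
      obtain ⟨u1, u2, u3, u4, u5⟩ := up_right (by omega) (by omega) hw
      have hr : ¬ rgt k (cY v) := by unfold rgt; omega
      have hwv := c_val w
      unfold vval at hwv
      have hx : ¬ cY v < cY w := by
        intro hc
        have := tau_right (k := k) hc (by omega) (by omega)
        omega
      have hy : ¬ cX v = cX w + 1 := by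
        intro hc
        have := tau_l (k := k) (x := cX w) a 5 (by omega) (by omega) (by omega)
        omega
      have u6 := fun e => (u5 e).2 hr
      unfold nbr at u2
      omega

/-- `N`-states and `F`-states have two improving neighbours -/
lemma StNF_two {k b : ℕ} {v : DCVert (12 * k + 1)}
    (h : StN k b (cX v) (cY v) ∨ StF k b (cX v) (cY v)) (hb : b < k)
    (hk : 4 ≤ k) : ∃ w w', orD k v w ∧ orD k v w' ∧ w ≠ w' := by
  have fin : ∀ x y x' y', (x + 2 ≤ y ∧ y < 12 * k ∧ nbr (cX v) (cY v) x y) →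
      (x' + 2 ≤ y' ∧ y' < 12 * k ∧ nbr (cX v) (cY v) x' y') → x ≠ x' →
      fLt k (cX v) (cY v) x y → fLt k (cX v) (cY v) x' y' →
      ∃ w w', orD k v w ∧ orD k v w' ∧ w ≠ w' := by
    intro x y x' y' h1 h2 hne f1 f2
    have hN : cY v < 12 * k := by
      rcases h with ⟨a, h⟩ | ⟨a, h⟩ <;> omega
    obtain ⟨w, d1, e1, e2⟩ := up_mk hN h1.1 h1.2.1 h1.2.2 f1
    obtain ⟨w', d2, e3, e4⟩ := up_mk hN h2.1 h2.2.1 h2.2.2 f2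
    refine ⟨w, w', d1, d2, ?_⟩
    rintro rfl
    omega
  unfold nbr at fin
  rcases h with ⟨a, h | h⟩ | ⟨a, h | h⟩
  · obtain ⟨h1, h2, h3⟩ := h
    have t1 : tau k (cX v) < tau k (cY v) := tau_left (by omega) (by omega)
    have t2 : tau k (cX v) < tau k (cY v + 1) := tau_left (by omega) (by omega)
    have t3 : tau k (cX v) < tau k (cX v + 1) := tau_left (by omega) (by omega)
    have hr : rgt k (cX v) := by unfold rgt; omega
    apply fin (cX v) (cY v + 1) (cX v + 1) (cY v + 1) (by omega) (by omega) (by omega)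
    · right
      rw [(fT_fP_left t1).1, (fT_fP_left t1).2, (fT_fP_left t2).1, (fT_fP_left t2).2]
      unfold posn
      rw [if_pos hr, if_pos hr]
      omega
    · left
      rw [(fT_fP_left t1).1]
      exact lt_min t3 t2
  · obtain ⟨h1, h2, h3⟩ := h
    have t1 : tau k (cY v) < tau k (cX v) := tau_right (by omega) (by omega) (by omega)
    have t2 : tau k (cY v) < tau k (cX v - 1) := tau_right (by omega) (by omega) (by omega)
    have t3 : tau k (cY v) < tau k (cY v - 1) := tau_right (by omega) (by omega) (by omega)
    have hr : ¬ rgt k (cY v) := by unfold rgt; omega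
    have hx : cX v ≠ cX v - 1 := by omega
    obtain ⟨w, d1, e1, e2⟩ := up_mk (v := v) (x := cX v - 1) (y := cY v) (by omega) (by omega)
      (by omega) (by unfold nbr; omega) (by
        right
        rw [(fT_fP_right t1).1, (fT_fP_right t1).2, (fT_fP_right t2).1, (fT_fP_right t2).2]
        unfold posn
        rw [if_neg hr, if_neg hr]
        omega)
    obtain ⟨w', d2, e3, e4⟩ := up_mk (v := v) (x := cX v - 1) (y := cY v - 1) (by omega)
      (by omega) (by omega) (by unfold nbr; omega) (by
        left
        rw [(fT_fP_right t1).1]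
        exact lt_min t2 t3)
    refine ⟨w, w', d1, d2, ?_⟩
    rintro rfl
    omega
  · obtain ⟨h1, h2, h3⟩ := h
    have s1 := tau_l (k := k) (x := cX v) (a + 1) 0 (by omega) (by omega) (by omega)
    have s2 := tau_r (k := k) (x := cY v) a 0 (by omega) (by omega) (by omega)
    have s3 := tau_l (k := k) (x := cX v + 1) (a + 1) 1 (by omega) (by omega) (by omega)
    have s4 := tau_r (k := k) (x := cY v - 1) a 1 (by omega) (by omega) (by omega)
    have t1 : tau k (cY v) < tau k (cX v) := by omega
    have t2 : tau k (cY v) < tau k (cX v + 1) := by omega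
    have hr : rgt k (cY v) := by unfold rgt; omega
    apply fin (cX v) (cY v - 1) (cX v + 1) (cY v) (by omega) (by omega) (by omega)
    · left
      rw [(fT_fP_right t1).1]
      exact lt_min t1 (by omega)
    · right
      rw [(fT_fP_right t1).1, (fT_fP_right t1).2, (fT_fP_right t2).1, (fT_fP_right t2).2]
      unfold posn
      rw [if_pos hr, if_pos hr]
      omega
  · obtain ⟨h1, h2, h3⟩ := h
    have s1 := tau_l (k := k) (x := cX v) (a + 1) 0 (by omega) (by omega) (by omega)
    have s2 := tau_r (k := k) (x := cY v) (a + 1) 0 (by omega) (by omega) (by omega)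
    have s3 := tau_l (k := k) (x := cX v + 1) (a + 1) 1 (by omega) (by omega) (by omega)
    have s4 := tau_r (k := k) (x := cY v - 1) (a + 1) 1 (by omega) (by omega) (by omega)
    have t1 : tau k (cX v) < tau k (cY v) := by omega
    have t2 : tau k (cX v) < tau k (cY v - 1) := by omega
    have hr : ¬ rgt k (cX v) := by unfold rgt; omega
    apply fin (cX v) (cY v - 1) (cX v + 1) (cY v) (by omega) (by omega) (by omega)
    · right
      rw [(fT_fP_left t1).1, (fT_fP_left t1).2, (fT_fP_left t2).1, (fT_fP_left t2).2]
      unfold posn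
      rw [if_neg hr, if_neg hr]
      omega
    · left
      rw [(fT_fP_left t1).1]
      exact lt_min (by omega) t1

/-- facet steps from an `N`-state stay in the same block -/
lemma StN_facet {k b i : ℕ} {v u : DCVert (12 * k + 1)} (h : StN k b (cX v) (cY v))
    (hb : b < k) (hk : 4 ≤ k) (hi : i ∈ v.1) (hu : i ∈ u.1)
    (hs : ∀ w : DCVert (12 * k + 1), i ∈ w.1 → ¬ orD k u w) : St k b (cX u) (cY u) := by
  rw [c_mem] at hi
  left
  obtain ⟨a, h | h⟩ := h
  · have := left_facet (by omega) hu hs hk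
    exact ⟨a, i - 6 * a, Or.inr (Or.inl (by omega))⟩
  · have := right_facet (by omega) (by omega) hu hs hk
    exact ⟨a, 12 * k - i - 6 * a, Or.inr (Or.inr (Or.inr (by omega)))⟩

/-- facet steps from an `F`-state are long -/
lemma StF_facet {k b i : ℕ} {v u : DCVert (12 * k + 1)} (h : StF k b (cX v) (cY v))
    (hb : b < k) (hk : 4 ≤ k) (hi : i ∈ v.1) (hu : i ∈ u.1)
    (hs : ∀ w : DCVert (12 * k + 1), i ∈ w.1 → ¬ orD k u w) :
    ∃ b', b' ≤ b + 2 ∧ St k b' (cX u) (cY u) ∧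
      (cY u + (6 * k - 16) ≤ cY v ∨ cX v + (6 * k - 16) ≤ cX u) := by
  rw [c_mem] at hi
  obtain ⟨a, h | h⟩ := h
  · by_cases hc : i ≤ cX v + 1
    · have := left_facet (by omega) hu hs hk
      exact ⟨2 * a + 2, by omega, Or.inl ⟨a + 1, i - cX v, Or.inl (by omega)⟩, by omega⟩
    · have := right_facet (by omega) (by omega) hu hs hk
      exact ⟨2 * a + 1, by omega,
        Or.inl ⟨a, 12 * k - i - 6 * a, Or.inr (Or.inr (Or.inl (by omega)))⟩, by omega⟩
  · by_cases hc : i ≤ cX v + 1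
    · have := left_facet (by omega) hu hs hk
      exact ⟨2 * a + 2, by omega, Or.inl ⟨a + 1, i - cX v, Or.inl (by omega)⟩, by omega⟩
    · have := right_facet (by omega) (by omega) hu hs hk
      exact ⟨2 * a + 3, by omega,
        Or.inl ⟨a + 1, 12 * k - i - 6 * (a + 1), Or.inr (Or.inr (Or.inl (by omega)))⟩, by omega⟩

/-- the main estimate -/
lemma run_long {k : ℕ} (hk : 4 ≤ k) {v s : DCVert (12 * k + 1)}
    {l : List (DCVert (12 * k + 1))} (h : RFRun (12 * k + 1) (orD k) ∅ v s l) :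
    ∀ b, St k b (cX v) (cY v) → (k - b) * (6 * k - 16) ≤ 2 * l.length := by
  generalize hT : (∅ : Finset ℕ) = T at h
  induction h with
  | sink T v hv h =>
    intro b hst
    subst hT
    by_cases hb : k ≤ b
    · rw [Nat.sub_eq_zero_of_le hb]; omega
    · obtain ⟨w, hw⟩ := St_out hst (by omega) hk
      exact absurd hw (h w (by simp))
  | follow T v w s l hv hvw hw huniq h ih =>
    intro b hst
    subst hT
    by_cases hb : k ≤ b
    · rw [Nat.sub_eq_zero_of_le hb]; omega
    · rcases hst with hst | hst
      · obtain ⟨x', y', h1, h2⟩ := StA_next hst (by omega) hk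
        obtain ⟨e1, e2⟩ := h2 w hvw
        have := ih rfl b (by rw [e1, e2]; exact h1)
        rw [List.length_cons]
        omega
      · obtain ⟨w1, w2, d1, d2, hne⟩ := StNF_two hst (by omega) hk
        exact absurd ((huniq w1 (by simp) d1).trans (huniq w2 (by simp) d2).symm) hne
  | facet T v u s l₁ l₂ i hv hi hiT hout hmulti h₁ h₂ ih₁ ih₂ =>
    intro b hst
    subst hT
    by_cases hb : k ≤ b
    · rw [Nat.sub_eq_zero_of_le hb]; omega
    · obtain ⟨hu, hs⟩ := run_sink h₁
      have hl := run_len h₁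
      have hl2 := run_len h₂
      have hN := (St_facts hst (by omega) hk).1
      simp only [insert_empty_eq, Finset.singleton_subset_iff] at hu hs
      rw [List.length_append, List.length_tail]
      rcases hst with hst | hst | hst
      · exfalso
        obtain ⟨x', y', h1, h2⟩ := StA_next hst (by omega) hk
        obtain ⟨w, hw1, hw2⟩ := hout
        refine hmulti ⟨w, ⟨hw1, hw2⟩, ?_⟩
        rintro w' ⟨-, hw'⟩
        have e1 := h2 w hw2
        have e2 := h2 w' hw'
        exact c_ext (by omega) (by omega)
      · have := ih₂ rfl b (StN_facet hst (by omega) hk hi hu hs)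
        omega
      · obtain ⟨b', hb', hst', hd⟩ := StF_facet hst (by omega) hk hi hu hs
        have h3 := ih₂ rfl b' hst'
        have h4 : (k - b) * (6 * k - 16) ≤ (2 + (k - b')) * (6 * k - 16) :=
          Nat.mul_le_mul_right _ (by omega)
        rw [Nat.add_mul] at h4
        have h5 := hl.2 hN
        omega

/-! ### The source -/

set_option maxHeartbeats 4000000 in
lemma source_eq {k : ℕ} (hk : 4 ≤ k) {q : DCVert (12 * k + 1)} (hq : ∀ w, ¬ orD k w q) :
    cX q = 1 ∧ cY q = 12 * k := by
  by_contra hc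
  have hv := c_val q
  have hv' := hv
  unfold vval at hv
  have wrap : ∀ x, 1 ≤ x → x + 2 ≤ 12 * k → cY q < 12 * k →
      ∃ w : DCVert (12 * k + 1), cX w = x ∧ cY w = 12 * k ∧ fF w < fF q := by
    intro x h1 h2 h3
    obtain ⟨w, e1, e2⟩ := c_mk (k := k) (x := x) (y := 12 * k) (by unfold vval; omega)
    refine ⟨w, e1, e2, ?_⟩
    rw [fF_lt]
    left
    have t1 := tau_pos (k := k) (x := cX q) (by omega)
    have t2 := tau_pos h3
    unfold fT
    rw [e2, tau_zero]
    omega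
  by_cases hN : cY q = 12 * k
  · obtain ⟨w, e1, e2⟩ := c_mk (k := k) (x := cX q - 1) (y := 12 * k) (by unfold vval; omega)
    refine hq w ⟨adj_wrap e2 (by omega), ?_⟩
    rw [fF_lt, e1, e2, hN]
    right
    have q1 : tau k (12 * k) < tau k (cX q) := by rw [tau_zero]; exact tau_pos (by omega)
    have q2 : tau k (12 * k) < tau k (cX q - 1) := by rw [tau_zero]; exact tau_pos (by omega)
    rw [(fT_fP_right q1).1, (fT_fP_right q1).2, (fT_fP_right q2).1, (fT_fP_right q2).2]
    have r : rgt k (12 * k) := by unfold rgt; omega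
    unfold posn
    rw [if_pos r, if_pos r]
    omega
  · have hN' : cY q < 12 * k := by omega
    rcases fT_fP hv' with ⟨a1, a2, a3, a4⟩ | ⟨a1, a2, a3, a4⟩
    · by_cases h0 : cX q = 0
      · by_cases h1 : cY q + 1 = 12 * k
        · obtain ⟨w, e1, e2, e3⟩ := wrap 1 (by omega) (by omega) hN'
          exact hq w ⟨adj_wrap e2 (by omega), e3⟩
        · obtain ⟨w, e1, e2, e3⟩ := wrap (cY q) (by omega) (by omega) hN'
          exact hq w ⟨adj_wrap e2 (by omega), e3⟩
      · obtain ⟨w, e1, e2⟩ := c_mk (k := k) (x := cX q - 1) (y := cY q) (by unfold vval; omega)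
        refine hq w ⟨(adj_iff (by omega) hN').2 (by omega), ?_⟩
        rw [fF_lt, e1, e2]
        left
        rw [a2]
        unfold fT
        have := tau_left (k := k) (x := cX q - 1) (y := cX q) (by omega) a4
        omega
    · have hx0 : cX q ≠ 0 := by
        intro h0
        have := tau_pos hN'
        rw [h0, tau_l (x := 0) 0 0 (by omega) (by omega) (by omega)] at a1
        omega
      by_cases h1 : cY q + 1 = 12 * k
      · obtain ⟨w, e1, e2, e3⟩ := wrap (cX q) (by omega) (by omega) hN'
        exact hq w ⟨adj_wrap e2 (by omega), e3⟩
      · obtain ⟨w, e1, e2⟩ := c_mk (k := k) (x := cX q) (y := cY q + 1) (by unfold vval; omega)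
        refine hq w ⟨(adj_iff (by omega) hN').2 (by omega), ?_⟩
        rw [fF_lt, e1, e2]
        left
        rw [a2]
        unfold fT
        have := tau_right (k := k) (x := cY q) (y := cY q + 1) (by omega) a4 (by omega)
        omega

lemma source_two {k : ℕ} (hk : 4 ≤ k) {q : DCVert (12 * k + 1)} (hx : cX q = 1)
    (hy : cY q = 12 * k) : ∃ w w', orD k q w ∧ orD k q w' ∧ w ≠ w' := by
  have lt : ∀ w : DCVert (12 * k + 1), cY w < 12 * k → fF q < fF w := by
    intro w hw
    rw [fF_lt]
    left
    have h := c_val w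
    unfold vval at h
    have t1 := tau_pos (k := k) (x := cX w) (by omega)
    have t2 := tau_pos hw
    unfold fT
    rw [hy, tau_zero]
    omega
  obtain ⟨w, e1, e2⟩ := c_mk (k := k) (x := 0) (y := 2) (by unfold vval; omega)
  obtain ⟨w', e3, e4⟩ := c_mk (k := k) (x := 0) (y := 12 * k - 1) (by unfold vval; omega)
  refine ⟨w, w', ⟨adj_wrap hy (by omega), lt w (by omega)⟩,
    ⟨adj_wrap hy (by omega), lt w' (by omega)⟩, ?_⟩
  rintro rfl
  omega

lemma source_run {k : ℕ} (hk : 4 ≤ k) {q s : DCVert (12 * k + 1)} (hq : ∀ w, ¬ orD k w q)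
    {l : List (DCVert (12 * k + 1))} (h : RFRun (12 * k + 1) (orD k) ∅ q s l) :
    (k - 1) * (6 * k - 16) ≤ 2 * l.length := by
  obtain ⟨hx, hy⟩ := source_eq hk hq
  obtain ⟨w1, w2, d1, d2, hne⟩ := source_two hk hx hy
  cases h with
  | sink _ _ hv h => exact absurd d1 (h w1 (by simp))
  | follow _ _ w _ l hv hvw hw huniq h =>
    exact absurd ((huniq w1 (by simp) d1).trans (huniq w2 (by simp) d2).symm) hne
  | facet _ _ u _ l₁ l₂ i hv hi hiT hout hmulti h₁ h₂ =>
    obtain ⟨hu, hs⟩ := run_sink h₁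
    have hl := run_len h₁
    have hl2 := run_len h₂
    simp only [insert_empty_eq, Finset.singleton_subset_iff] at hu hs
    rw [List.length_append, List.length_tail]
    have key : ∃ b, b ≤ 1 ∧ St k b (cX u) (cY u) := by
      rw [c_mem, hx, hy] at hi
      by_cases hc : i ≤ 2
      · have := left_facet (by omega) hu hs hk
        by_cases h2 : i = 2
        · exact ⟨0, by omega, Or.inl ⟨0, 2, Or.inr (Or.inl (by omega))⟩⟩
        · exact ⟨0, by omega, Or.inl ⟨0, i, Or.inl (by omega)⟩⟩
      · have := right_facet (by omega) (by omega) hu hs hk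
        exact ⟨1, by omega, Or.inl ⟨0, 0, Or.inr (Or.inr (Or.inl (by omega)))⟩⟩
    obtain ⟨b, hb, hst⟩ := key
    have h3 := run_long hk h₂ b hst
    have h4 : (k - 1) * (6 * k - 16) ≤ (k - b) * (6 * k - 16) :=
      Nat.mul_le_mul_right _ (by omega)
    omega

/-- there is a constant `c > 0` such that for every `k ≥ 1` and
`n = 12k+1` there is an AUSO of `C°(n)` on which every possible run of the random
facet algorithm from the global source to the global sink visits at least `c·n²`
vertices. -/
theorem random_facet_quadratic_lower_bound :
    ∃ c : ℝ, 0 < c ∧ ∀ k : ℕ, 1 ≤ k → ∀ n : ℕ, n = 12 * k + 1 →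
      ∃ D : DCVert n → DCVert n → Prop,
        (∀ v w : DCVert n, (v.1 ∩ w.1).card = 3 ↔ (D v w ∨ D w v)) ∧
        (∀ v w : DCVert n, ¬ (D v w ∧ D w v)) ∧
        (∀ v : DCVert n, ¬ Relation.TransGen D v v) ∧
        (∀ T : Finset ℕ, T ⊆ Finset.range n → (∃ v : DCVert n, T ⊆ v.1) →
          ∃! t : DCVert n, T ⊆ t.1 ∧ ∀ w, T ⊆ w.1 → ¬ D t w) ∧
        (∀ (qg t : DCVert n), (∀ w, ¬ D w qg) → (∀ w, ¬ D t w) →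
          ∀ l : List (DCVert n), RFRun n D ∅ qg t l → c * (n : ℝ) ^ 2 ≤ l.length) := by
  refine ⟨1 / 2704, by norm_num, ?_⟩
  rintro k hk n rfl
  refine ⟨orD k, orD_adj, fun v w h => lt_asymm h.1.2 h.2.2,
    fun v h => lt_irrefl _ (orD_trans h), fun T _ h => exists_sink T h, ?_⟩
  intro q t hq _ l hrun
  have h1 : 1 ≤ l.length := (run_len hrun).1
  by_cases h4 : 4 ≤ k
  · have h2 := source_run h4 hq hrun
    obtain ⟨m, rfl⟩ : ∃ m, k = m + 4 := ⟨k - 4, by omega⟩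
    have e1 : m + 4 - 1 = m + 3 := by omega
    have e2 : 6 * (m + 4) - 16 = 6 * m + 8 := by omega
    rw [e1, e2] at h2
    have h3 : ((m : ℝ) + 3) * (6 * m + 8) ≤ 2 * (l.length : ℝ) := by exact_mod_cast h2
    have hm : (0 : ℝ) ≤ m := Nat.cast_nonneg m
    push_cast
    nlinarith
  · have h2 : (k : ℝ) ≤ 3 := by exact_mod_cast (by omega : k ≤ 3)
    have h3 : (1 : ℝ) ≤ l.length := by exact_mod_cast h1
    have h5 : (0 : ℝ) ≤ k := Nat.cast_nonneg k
    push_cast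
    nlinarith
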